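/- Let β ∈ F_2[x,y,z,w] lie in the F_2-subalgebra generated by b_4, b_6, b_7, b_8, and suppose that for some i ≥ 0 the polynomial β·(c'_4)^i satisfies κ(β·(c'_4)^i) = β·(c'_4)^i. Then β = β'·(b_8)^i for some β' in the F_2-subalgebra generated by a_8, a_12, a_14, a_15. -/

import Mathlib

noncomputable section

open MvPolynomial

/-- The set of `𝔽₂`-linear combinations (i.e. subset sums) of the family `v`. -/
def spanF2 {R : Type*} [CommRing R] {n : ℕ} (v : Fin n → R) : Finset R :=
  letI := Classical.decEq R
  Finset.image (fun s : Finset (Fin n) => ∑ j ∈ s, v j) Finset.univ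

/-- The Dickson invariant `D_i(v₁, …, vₙ)`: the `(2^n - 2^(n-i))`-th elementary symmetric
polynomial of the `2^n` elements of the `𝔽₂`-linear span of `v₁, …, vₙ`. -/
def dickson {R : Type*} [CommRing R] {n : ℕ} (v : Fin n → R) (i : ℕ) : R :=
  (spanF2 v).val.esymm (2 ^ n - 2 ^ (n - i))

/-- The product `∏_{α ∈ span_{𝔽₂}(v)} (w + α)`. -/
def prodAdd {R : Type*} [CommRing R] {n : ℕ} (v : Fin n → R) (w : R) : R :=
  ∏ α ∈ spanF2 v, (w + α)

/-- The polynomial ring `𝔽₂[x, y, z, w]`. -/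
abbrev R4 := MvPolynomial (Fin 4) (ZMod 2)

def xP : R4 := X 0
def yP : R4 := X 1
def zP : R4 := X 2
def wP : R4 := X 3

def a8 : R4 := dickson ![xP, yP, zP, wP] 1
def a12 : R4 := dickson ![xP, yP, zP, wP] 2
def a14 : R4 := dickson ![xP, yP, zP, wP] 3
def a15 : R4 := dickson ![xP, yP, zP, wP] 4

def b4 : R4 := dickson ![xP, yP, zP] 1
def b6 : R4 := dickson ![xP, yP, zP] 2
def b7 : R4 := dickson ![xP, yP, zP] 3
def b8 : R4 := prodAdd ![xP, yP, zP] wP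

def c2 : R4 := dickson ![xP, yP] 1
def c3 : R4 := dickson ![xP, yP] 2
def c4' : R4 := prodAdd ![xP, yP] zP
def c4'' : R4 := prodAdd ![xP, yP] wP

/-- The `𝔽₂`-algebra automorphism `κ` of `𝔽₂[x,y,z,w]` fixing `x` and `y` and
exchanging `z` and `w`. -/
def kappaEnd : R4 →ₐ[ZMod 2] R4 := aeval ![xP, yP, wP, zP]

/-!
Exchanging `z` and `w` turns `c'₄` into a multiple of `w`, while `w ∤ c'₄`, so `κ`-invariance of
`β c'₄ⁱ` forces `wⁱ ∣ β`. Write `β` as a polynomial in `b₈` whose coefficients are Dickson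
polynomials in `x, y, z`. No nonzero polynomial in `x, y, z` is divisible by `w`, and `w` divides
`b₈` exactly once, so `wⁱ ∣ β` forces `β = γ b₈ⁱ` with `γ` again in the algebra generated by
`b₄, b₆, b₇, b₈`. The product `b₈ c'₄` runs over the elements of `⟨x, y, z, w⟩` outside `⟨x, y⟩`, so
it is `κ`-invariant, and hence so is `γ`. Moreover `γ` is invariant under the transvections
preserving `⟨x, y, z⟩`, and these together with `κ` generate `GL₄(𝔽₂)`, so `γ` is a Dickson
polynomial in `x, y, z, w` by Dickson's theorem.

For Dickson's theorem, the polynomial `∏ (T + α)` over the span of the variables is additive in `T`,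
so its only nonzero coefficients are `1` and the Dickson invariants. Thus the fraction field of the
polynomial ring is the splitting field of a separable polynomial over the Dickson algebra, and its
Galois group acts by linear substitutions. The Dickson algebra is itself a polynomial ring, hence
integrally closed, so it contains every invariant polynomial.
-/

open scoped Polynomial

section Span

variable {R S M : Type*} [CommRing R] [CommRing S] [CommMonoid M] {n : ℕ}

theorem mem_spanF2_iff_exists_sum {v : Fin n → R} {a : R} :
    a ∈ spanF2 v ↔ ∃ s : Finset (Fin n), ∑ j ∈ s, v j = a := by
  let := Classical.decEq R
  simp [spanF2]

theorem map_spanF2 (f : R →+* S) (hf : Function.Injective f) (v : Fin n → R) :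
    (spanF2 v).map ⟨f, hf⟩ = spanF2 (f ∘ v) := by
  ext a
  simp [mem_spanF2_iff_exists_sum, ← map_sum]

theorem map_prodAdd (f : R →+* S) (hf : Function.Injective f) (v : Fin n → R) (w : R) :
    f (prodAdd v w) = prodAdd (f ∘ v) (f w) := by
  simp [prodAdd, ← map_spanF2 f hf]

theorem map_dickson (f : R →+* S) (hf : Function.Injective f) (v : Fin n → R) (i : ℕ) :
    f (dickson v i) = dickson (f ∘ v) i := by
  have esymm_val (s : Finset R) (k : ℕ) : s.val.esymm k = ∑ t ∈ s.powersetCard k, ∏ a ∈ t, a := by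
    simpa using Finset.esymm_map_val id s k
  rw [dickson, dickson, ← map_spanF2 f hf, Finset.map_val, esymm_val]
  simpa using (Finset.esymm_map_val f (spanF2 v) _).symm

variable [Algebra (ZMod 2) R]

theorem mem_spanF2 {v : Fin n → R} {a : R} :
    a ∈ spanF2 v ↔ a ∈ Submodule.span (ZMod 2) (Set.range v) := by
  rw [mem_spanF2_iff_exists_sum]
  constructor
  · rintro ⟨s, rfl⟩
    exact sum_mem fun j _ ↦ Submodule.subset_span ⟨j, rfl⟩
  · rw [Submodule.mem_span_range_iff_exists_fun]
    rintro ⟨c, rfl⟩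
    refine ⟨Finset.univ.filter (c · ≠ 0), ?_⟩
    rw [Finset.sum_filter]
    refine Finset.sum_congr rfl fun j _ ↦ ?_
    rcases (by decide : ∀ c : ZMod 2, c = 0 ∨ c = 1) (c j) with h | h <;> simp [h]

theorem card_spanF2 [Nontrivial R] {v : Fin n → R} (hv : LinearIndependent (ZMod 2) v) :
    (spanF2 v).card = 2 ^ n := by
  have hcoe : (spanF2 v : Set R) = Submodule.span (ZMod 2) (Set.range v) :=
    Set.ext fun _ ↦ mem_spanF2
  rw [← Set.ncard_coe_finset, hcoe, ← Nat.card_coe_set_eq]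
  have : Module.Finite (ZMod 2) (Submodule.span (ZMod 2) (Set.range v)) :=
    Module.Finite.span_of_finite _ (Set.finite_range v)
  have := Module.natCard_eq_pow_finrank (K := ZMod 2) (V := Submodule.span (ZMod 2) (Set.range v))
  simpa [finrank_span_eq_card hv] using this

theorem spanF2_comp_eq_of_mem (f : R →+* R) (hf : Function.Injective f) {v : Fin n → R}
    (hv : ∀ j, f (v j) ∈ spanF2 v) : spanF2 (f ∘ v) = spanF2 v := by
  refine Finset.eq_of_subset_of_card_le (fun a ha ↦ ?_) (by rw [← map_spanF2 f hf, Finset.card_map])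
  rw [mem_spanF2] at ha ⊢
  exact Submodule.span_le.2 (Set.range_subset_iff.2 fun j ↦ mem_spanF2.1 (hv j)) ha

theorem spanF2_snoc_of_mem {v : Fin n → R} {w : R} (hw : w ∈ spanF2 v) :
    spanF2 (Fin.snoc v w : Fin (n + 1) → R) = spanF2 v := by
  ext a
  rw [mem_spanF2, mem_spanF2, Fin.range_snoc, Submodule.span_insert_eq_span (mem_spanF2.1 hw)]

theorem prod_spanF2_snoc {v : Fin n → R} {w : R} (hw : w ∉ spanF2 v) (g : R → M) :
    ∏ α ∈ spanF2 (Fin.snoc v w : Fin (n + 1) → R), g α =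
      (∏ α ∈ spanF2 v, g α) * ∏ α ∈ spanF2 v, g (w + α) := by
  have hdisj : Disjoint (spanF2 v) ((spanF2 v).map (addLeftEmbedding w)) := by
    simp only [Finset.disjoint_left, Finset.mem_map, addLeftEmbedding_apply, mem_spanF2]
    rintro _ hα ⟨β, hβ, rfl⟩
    exact hw (mem_spanF2.2 ((Submodule.add_mem_iff_left _ hβ).1 hα))
  have hunion : spanF2 (Fin.snoc v w : Fin (n + 1) → R) =
      (spanF2 v).disjUnion ((spanF2 v).map (addLeftEmbedding w)) hdisj := by
    ext a
    simp only [Finset.mem_disjUnion, Finset.mem_map, addLeftEmbedding_apply, mem_spanF2,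
      Fin.range_snoc, Submodule.mem_span_insert]
    constructor
    · rintro ⟨c, b, hb, rfl⟩
      rcases (by decide : ∀ c : ZMod 2, c = 0 ∨ c = 1) c with rfl | rfl
      · exact .inl (by simpa using hb)
      · exact .inr ⟨b, hb, by simp⟩
    · rintro (ha | ⟨b, hb, rfl⟩)
      · exact ⟨0, a, ha, by simp⟩
      · exact ⟨1, b, hb, by simp⟩
  rw [hunion, Finset.prod_disjUnion, Finset.prod_map]
  rfl

theorem prodAdd_add_of_mem (v : Fin n → R) (w : R) {t : R} (ht : t ∈ spanF2 v) :
    prodAdd v (w + t) = prodAdd v w := by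
  simp only [prodAdd, mem_spanF2] at ht ⊢
  refine Finset.prod_bij' (fun α _ ↦ t + α) (fun α _ ↦ t + α) ?_ ?_ ?_ ?_ ?_
  · exact fun α hα ↦ mem_spanF2.2 (add_mem ht (mem_spanF2.1 hα))
  · exact fun α hα ↦ mem_spanF2.2 (add_mem ht (mem_spanF2.1 hα))
  · simp [← add_assoc, ZModModule.add_self]
  · simp [← add_assoc, ZModModule.add_self]
  · simp [add_assoc]

theorem prodAdd_snoc {v : Fin n → R} {w : R} (hw : w ∉ spanF2 v) (t : R) :
    prodAdd (Fin.snoc v w : Fin (n + 1) → R) t = prodAdd v t * prodAdd v (t + w) := by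
  simp only [prodAdd, prod_spanF2_snoc hw, add_assoc]

theorem prodAdd_eq_zero_iff [IsDomain R] {v : Fin n → R} {w : R} :
    prodAdd v w = 0 ↔ w ∈ spanF2 v := by
  simp [prodAdd, Finset.prod_eq_zero_iff, ← ZModModule.sub_eq_add, sub_eq_zero]

end Span

section Linearized

variable {R : Type*} [CommRing R] {p : ℕ}

/-- The `p`-polynomials (linearized polynomials) over `R`: the linear combinations of the monomials
`X ^ p ^ k`. In characteristic `p` they induce additive maps. -/
def linearizedPolynomials (p : ℕ) (R : Type*) [CommRing R] : Submodule R R[X] :=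
  Submodule.span R (Set.range fun k ↦ Polynomial.X ^ p ^ k)

theorem coeff_eq_zero_of_mem_linearizedPolynomials {f : R[X]} (hf : f ∈ linearizedPolynomials p R)
    {m : ℕ} (hm : ∀ k, m ≠ p ^ k) : f.coeff m = 0 := by
  suffices linearizedPolynomials p R ≤ LinearMap.ker (Polynomial.lcoeff R m) from this hf
  refine Submodule.span_le.2 (Set.range_subset_iff.2 fun k ↦ ?_)
  simp [Polynomial.coeff_X_pow, hm k]

variable [ExpChar R p]

theorem pow_mem_linearizedPolynomials {f : R[X]} (hf : f ∈ linearizedPolynomials p R) :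
    f ^ p ∈ linearizedPolynomials p R := by
  induction hf using Submodule.span_induction with
  | mem f hf =>
    obtain ⟨k, rfl⟩ := hf
    exact Submodule.subset_span ⟨k + 1, by simp only [pow_succ, pow_mul]⟩
  | zero => simp [zero_pow (expChar_ne_zero R p)]
  | add f g _ _ hf hg => simpa only [add_pow_expChar] using add_mem hf hg
  | smul c f _ hf => simpa only [smul_pow] using Submodule.smul_mem _ (c ^ p) hf

theorem comp_X_add_C_of_mem_linearizedPolynomials {f : R[X]} (hf : f ∈ linearizedPolynomials p R)
    (w : R) : f.comp (Polynomial.X + Polynomial.C w) = f + Polynomial.C (f.eval w) := by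
  induction hf using Submodule.span_induction with
  | mem f hf =>
    obtain ⟨k, rfl⟩ := hf
    simp [add_pow_expChar_pow]
  | zero => simp
  | add f g _ _ hf hg =>
    simp only [Polynomial.add_comp, Polynomial.eval_add, Polynomial.C_add, hf, hg]
    ring
  | smul c f _ hf =>
    simp only [Polynomial.smul_comp, Polynomial.eval_smul, hf, smul_add, Polynomial.smul_C]

end Linearized

section SpanPolynomial

variable {R : Type*} [CommRing R] {n : ℕ}

/-- The monic polynomial `∏ (X + α)`, with `α` running over the `𝔽₂`-linear span of `v`. -/
def spanPolynomial (v : Fin n → R) : R[X] :=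
  ∏ α ∈ spanF2 v, (Polynomial.X + Polynomial.C α)

theorem monic_spanPolynomial (v : Fin n → R) : (spanPolynomial v).Monic :=
  Polynomial.monic_prod_of_monic _ _ fun α _ ↦ Polynomial.monic_X_add_C α

/-- The subalgebra generated by the Dickson invariants `D₁(v), …, Dₙ(v)`. -/
def dicksonAlgebra [Algebra (ZMod 2) R] (v : Fin n → R) : Subalgebra (ZMod 2) R :=
  Algebra.adjoin (ZMod 2) (Set.range fun j : Fin n ↦ dickson v (j + 1))

variable [Nontrivial R] [Algebra (ZMod 2) R]

-- Adjoining a vector `w` to `v` replaces the polynomial `f` of `v` by `f ^ 2 + f(w) f`.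
theorem spanPolynomial_mem_linearizedPolynomials (v : Fin n → R) :
    spanPolynomial v ∈ linearizedPolynomials 2 R := by
  have : ExpChar R 2 := expChar_of_injective_algebraMap (algebraMap (ZMod 2) R).injective 2
  induction v using Fin.snocInduction with
  | elim0 =>
    have hspan : spanF2 (Fin.elim0 : Fin 0 → R) = {0} := by
      ext a
      simp [mem_spanF2]
    exact Submodule.subset_span ⟨0, by simp [spanPolynomial, hspan]⟩
  | snoc v w hv =>
    by_cases hw : w ∈ spanF2 v
    · rwa [spanPolynomial, spanF2_snoc_of_mem hw]
    have hcomp : ∏ α ∈ spanF2 v, (Polynomial.X + Polynomial.C (w + α)) =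
        (spanPolynomial v).comp (Polynomial.X + Polynomial.C w) := by
      simp [spanPolynomial, Polynomial.prod_comp, add_assoc]
    rw [spanPolynomial, prod_spanF2_snoc hw, hcomp, ← spanPolynomial,
      comp_X_add_C_of_mem_linearizedPolynomials hv, mul_add, ← sq, mul_comm _ (Polynomial.C _),
      ← Polynomial.smul_eq_C_mul]
    exact add_mem (pow_mem_linearizedPolynomials hv) (Submodule.smul_mem _ _ hv)

variable {v : Fin n → R}

theorem natDegree_spanPolynomial (hv : LinearIndependent (ZMod 2) v) :
    (spanPolynomial v).natDegree = 2 ^ n := by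
  rw [spanPolynomial, Polynomial.natDegree_prod_of_monic _ _ fun α _ ↦ Polynomial.monic_X_add_C α]
  simp [card_spanF2 hv]

theorem coeff_spanPolynomial (hv : LinearIndependent (ZMod 2) v) (i : ℕ) :
    (spanPolynomial v).coeff (2 ^ (n - i)) = dickson v i := by
  have hcard : Multiset.card (spanF2 v).val = 2 ^ n := card_spanF2 hv
  have hle : 2 ^ (n - i) ≤ Multiset.card (spanF2 v).val :=
    hcard ▸ Nat.pow_le_pow_right two_pos (Nat.sub_le n i)
  rw [dickson, ← hcard]
  exact Multiset.prod_X_add_C_coeff _ hle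

theorem coeff_spanPolynomial_mem_dicksonAlgebra (hv : LinearIndependent (ZMod 2) v) (m : ℕ) :
    (spanPolynomial v).coeff m ∈ dicksonAlgebra v := by
  by_cases hm : ∃ k, m = 2 ^ k
  · obtain ⟨k, rfl⟩ := hm
    rcases lt_trichotomy k n with hk | rfl | hk
    · have hindex : n - (n - 1 - k + 1) = k := by lia
      rw [← hindex, coeff_spanPolynomial hv]
      exact Algebra.subset_adjoin ⟨⟨n - 1 - k, by lia⟩, rfl⟩
    · rw [← natDegree_spanPolynomial hv, (monic_spanPolynomial v).coeff_natDegree]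
      exact one_mem _
    · have hdeg : (spanPolynomial v).natDegree < 2 ^ k :=
        natDegree_spanPolynomial hv ▸ Nat.pow_lt_pow_right one_lt_two hk
      exact Polynomial.coeff_eq_zero_of_natDegree_lt hdeg ▸ zero_mem _
  · rw [coeff_eq_zero_of_mem_linearizedPolynomials (spanPolynomial_mem_linearizedPolynomials v)
      (not_exists.1 hm)]
    exact zero_mem _

end SpanPolynomial

section SplitMonic

variable {A B : Type*} [CommRing A] [CommRing B] [Algebra A B] {f : A[X]} {s : Finset B}

theorem monic_of_map_eq_prod_X_sub_C [FaithfulSMul A B]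
    (hf : f.map (algebraMap A B) = ∏ b ∈ s, (Polynomial.X - Polynomial.C b)) : f.Monic :=
  Polynomial.monic_of_injective (FaithfulSMul.algebraMap_injective A B)
    (hf ▸ Polynomial.monic_prod_X_sub_C _ s)

theorem aeval_eq_zero_iff_mem_of_map_eq_prod_X_sub_C [IsDomain B]
    (hf : f.map (algebraMap A B) = ∏ b ∈ s, (Polynomial.X - Polynomial.C b)) {b : B} :
    Polynomial.aeval b f = 0 ↔ b ∈ s := by
  rw [← Polynomial.eval_map_algebraMap, hf]
  simp [Polynomial.eval_prod, Finset.prod_eq_zero_iff, sub_eq_zero]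

theorem isIntegral_of_adjoin_roots_eq_top [IsDomain B] [FaithfulSMul A B]
    (hf : f.map (algebraMap A B) = ∏ b ∈ s, (Polynomial.X - Polynomial.C b))
    (hs : Algebra.adjoin A (s : Set B) = ⊤) : Algebra.IsIntegral A B := by
  have hroot : (s : Set B) ⊆ integralClosure A B := fun b hb ↦
    ⟨f, monic_of_map_eq_prod_X_sub_C hf, (aeval_eq_zero_iff_mem_of_map_eq_prod_X_sub_C hf).2 hb⟩
  have htop : (⊤ : Subalgebra A B) ≤ integralClosure A B := hs ▸ Algebra.adjoin_le hroot
  exact Algebra.isIntegral_def.2 fun b ↦ htop Algebra.mem_top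

theorem map_algebraMap_eq_prod_X_sub_C {L : Type*} [CommRing L] [Algebra A L] [Algebra B L]
    [IsScalarTower A B L] (hf : f.map (algebraMap A B) = ∏ b ∈ s, (Polynomial.X - Polynomial.C b)) :
    f.map (algebraMap A L) = ∏ b ∈ s, (Polynomial.X - Polynomial.C (algebraMap B L b)) := by
  rw [IsScalarTower.algebraMap_eq A B L, ← Polynomial.map_map, hf]
  simp only [Polynomial.map_prod, Polynomial.map_sub, Polynomial.map_X, Polynomial.map_C]

theorem isSplittingField_of_adjoin_roots_eq_top {K L : Type*} [Field K] [Field L] [IsDomain B]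
    [Algebra A K] [Algebra A L] [Algebra B L] [Algebra K L] [IsScalarTower A K L]
    [IsScalarTower A B L] [IsFractionRing B L]
    (hf : f.map (algebraMap A B) = ∏ b ∈ s, (Polynomial.X - Polynomial.C b))
    (hs : Algebra.adjoin A (s : Set B) = ⊤) :
    (f.map (algebraMap A K)).IsSplittingField K L := by
  have hmap : (f.map (algebraMap A K)).map (algebraMap K L) =
      ∏ b ∈ s, (Polynomial.X - Polynomial.C (algebraMap B L b)) := by
    rw [Polynomial.map_map, ← IsScalarTower.algebraMap_eq, map_algebraMap_eq_prod_X_sub_C hf]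
  rw [isSplittingField_iff_intermediateField, hmap, eq_top_iff]
  refine ⟨.prod fun b _ ↦ .X_sub_C _, fun t _ ↦ ?_⟩
  have hmem (b : B) :
      algebraMap B L b ∈ IntermediateField.adjoin K ((f.map (algebraMap A K)).rootSet L) := by
    have hb : b ∈ Algebra.adjoin A (s : Set B) := hs ▸ Algebra.mem_top
    induction hb using Algebra.adjoin_induction with
    | mem b hb =>
      refine IntermediateField.subset_adjoin _ _ (Polynomial.mem_rootSet'.2 ⟨?_, ?_⟩)
      · rw [hmap]
        exact (Polynomial.monic_prod_X_sub_C _ s).ne_zero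
      · rw [Polynomial.aeval_map_algebraMap, Polynomial.aeval_algebraMap_apply,
          (aeval_eq_zero_iff_mem_of_map_eq_prod_X_sub_C hf).2 hb, map_zero]
    | algebraMap a =>
      rw [← IsScalarTower.algebraMap_apply, IsScalarTower.algebraMap_apply A K L]
      exact IntermediateField.algebraMap_mem _ _
    | add _ _ _ _ h₁ h₂ => exact map_add (algebraMap B L) _ _ ▸ add_mem h₁ h₂
    | mul _ _ _ _ h₁ h₂ => exact map_mul (algebraMap B L) _ _ ▸ mul_mem h₁ h₂
  obtain ⟨a, b, _, rfl⟩ := IsFractionRing.div_surjective (A := B) t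
  exact div_mem (hmem a) (hmem b)

theorem isInvariant_of_adjoin_roots_eq_top [IsIntegrallyClosed A] [IsDomain B]
    [IsIntegrallyClosed B] [FaithfulSMul A B]
    (hf : f.map (algebraMap A B) = ∏ b ∈ s, (Polynomial.X - Polynomial.C b))
    (hs : Algebra.adjoin A (s : Set B) = ⊤) : Algebra.IsInvariant A B (B ≃ₐ[A] B) := by
  have : IsDomain A := (FaithfulSMul.algebraMap_injective A B).isDomain
  have := isIntegral_of_adjoin_roots_eq_top hf hs
  let K := FractionRing A
  let L := FractionRing B
  let := FractionRing.liftAlgebra A L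
  have := FractionRing.isScalarTower_liftAlgebra A L
  have hsplit : (f.map (algebraMap A K)).IsSplittingField K L :=
    isSplittingField_of_adjoin_roots_eq_top hf hs
  have hsep : (f.map (algebraMap A K)).Separable := by
    rw [← Polynomial.separable_map (algebraMap K L), Polynomial.map_map,
      ← IsScalarTower.algebraMap_eq, map_algebraMap_eq_prod_X_sub_C hf]
    exact Polynomial.separable_prod_X_sub_C_iff'.2 fun _ _ _ _ h ↦ IsFractionRing.injective B L h
  have : IsGalois K L := .of_separable_splitting_field hsep
  have : FiniteDimensional K L :=
    Polynomial.IsSplittingField.finiteDimensional L (f.map (algebraMap A K))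
  exact Algebra.isInvariant_of_isGalois' A K L B

end SplitMonic

section LinearSubstitution

variable {k σ : Type*} [DecidableEq σ]

/-- The elementary transvection `xᵢ ↦ xᵢ + xⱼ` of a polynomial ring, fixing all other variables. -/
def transvectionHom (k : Type*) [CommSemiring k] (i j : σ) :
    MvPolynomial σ k →ₐ[k] MvPolynomial σ k :=
  bind₁ (Function.update X i (X i + X j))

theorem transvectionHom_X_self [CommSemiring k] (i j : σ) :
    transvectionHom k i j (X i) = X i + X j := by
  rw [transvectionHom, bind₁_X_right, Function.update_self]

theorem transvectionHom_X_of_ne [CommSemiring k] {i l : σ} (h : l ≠ i) (j : σ) :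
    transvectionHom k i j (X l) = X l := by
  rw [transvectionHom, bind₁_X_right, Function.update_of_ne h]

theorem transvectionHom_rename [CommSemiring k] (e : Equiv.Perm σ) (i j : σ)
    (p : MvPolynomial σ k) :
    transvectionHom k (e i) (e j) (rename e p) = rename e (transvectionHom k i j p) := by
  refine DFunLike.congr_fun (f := (transvectionHom k (e i) (e j)).comp (rename e))
    (g := (rename e).comp (transvectionHom k i j)) (algHom_ext fun l ↦ ?_) p
  rcases eq_or_ne l i with rfl | h
  · simp [transvectionHom_X_self]
  · simp [transvectionHom_X_of_ne h, transvectionHom_X_of_ne (e.injective.ne h)]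

theorem transvectionHom_injective [CommRing k] [CharP k 2] {i j : σ} (h : i ≠ j) :
    Function.Injective (transvectionHom k i j) := by
  have hinv : (transvectionHom k i j).comp (transvectionHom k i j) = AlgHom.id k _ := by
    refine algHom_ext fun l ↦ ?_
    rcases eq_or_ne l i with rfl | hl
    · simp [transvectionHom_X_self, transvectionHom_X_of_ne h.symm, add_assoc,
        CharTwo.add_self_eq_zero]
    · simp [transvectionHom_X_of_ne hl]
  exact Function.LeftInverse.injective (g := transvectionHom k i j) (DFunLike.congr_fun hinv)

variable [Fintype σ]

theorem bind₁_toMvPolynomial_transvection_one [CommRing k] (i j : σ) :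
    bind₁ (Matrix.transvection i j (1 : k)).toMvPolynomial = transvectionHom k i j := by
  refine algHom_ext fun l ↦ ?_
  have hsingle : (Matrix.single i j (1 : k)).toMvPolynomial l = if l = i then X j else 0 := by
    rw [Matrix.toMvPolynomial, Finset.sum_eq_single j _ (by simp)]
    · split_ifs with h <;> simp [h, Ne.symm, X]
    · intro m _ hm
      simp [hm.symm]
  rw [bind₁_X_right, Matrix.transvection, Matrix.toMvPolynomial_add, Matrix.toMvPolynomial_one,
    Pi.add_apply, hsingle]
  rcases eq_or_ne l i with rfl | h
  · rw [if_pos rfl, transvectionHom_X_self]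
  · rw [if_neg h, add_zero, transvectionHom_X_of_ne h]

theorem exists_isUnit_eq_bind₁_toMvPolynomial [Field k]
    {f : MvPolynomial σ k →ₐ[k] MvPolynomial σ k} (hf : Function.Injective f)
    (hspan : ∀ i, f (X i) ∈ Submodule.span k (Set.range (X : σ → MvPolynomial σ k))) :
    ∃ M : Matrix σ σ k, IsUnit M ∧ f = bind₁ M.toMvPolynomial := by
  choose M hM using fun i ↦ Submodule.mem_span_range_iff_exists_fun k |>.1 (hspan i)
  have hX (i : σ) : f (X i) = Matrix.toMvPolynomial M i := by
    simp [← hM i, Matrix.toMvPolynomial, smul_eq_C_mul, C_mul_X_eq_monomial]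
  refine ⟨M, ?_, algHom_ext fun i ↦ by rw [hX, bind₁_X_right]⟩
  have hind : LinearIndependent k (f.toLinearMap ∘ (X : σ → MvPolynomial σ k)) :=
    (linearIndependent_X σ k).map' _ (LinearMap.ker_eq_bot.2 hf)
  have hcomp : f.toLinearMap ∘ (X : σ → MvPolynomial σ k) =
      Fintype.linearCombination k (X : σ → MvPolynomial σ k) ∘ M :=
    funext fun i ↦ (hM i).symm
  exact Matrix.linearIndependent_rows_iff_isUnit.1 (LinearIndependent.of_comp _ (hcomp ▸ hind))

theorem bind₁_toMvPolynomial_eq_self_of_transvection {p : MvPolynomial σ (ZMod 2)}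
    (hp : ∀ i j, i ≠ j → transvectionHom (ZMod 2) i j p = p)
    {M : Matrix σ σ (ZMod 2)} (hM : IsUnit M) : bind₁ M.toMvPolynomial p = p := by
  refine Matrix.diagonal_transvection_induction_of_det_ne_zero
    (fun M ↦ bind₁ M.toMvPolynomial p = p) M ((M.isUnit_iff_isUnit_det).1 hM).ne_zero ?_ ?_ ?_
  · intro D hD
    have hone : D = 1 := by
      rw [Matrix.det_diagonal, Finset.prod_ne_zero_iff] at hD
      exact funext fun i ↦ (by decide : ∀ c : ZMod 2, c ≠ 0 → c = 1) _ (hD i (Finset.mem_univ i))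
    rw [hone, Matrix.diagonal_one', Matrix.toMvPolynomial_one, bind₁_X_left, AlgHom.id_apply]
  · rintro ⟨i, j, hij, c⟩
    rcases (by decide : ∀ c : ZMod 2, c = 0 ∨ c = 1) c with rfl | rfl
    · simp [Matrix.TransvectionStruct.toMatrix, Matrix.toMvPolynomial_one]
    · rw [Matrix.TransvectionStruct.toMatrix, bind₁_toMvPolynomial_transvection_one, hp i j hij]
  · intro A B _ _ hA hB
    rw [funext (Matrix.toMvPolynomial_mul A B), ← bind₁_bind₁, hA, hB]

end LinearSubstitution

section Dickson

variable {n : ℕ}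

theorem exists_map_eq_spanPolynomial {R : Type*} [CommRing R] [Nontrivial R] [Algebra (ZMod 2) R]
    {v : Fin n → R} (hv : LinearIndependent (ZMod 2) v) :
    ∃ f : (dicksonAlgebra v)[X], f.map (algebraMap (dicksonAlgebra v) R) =
      ∏ α ∈ spanF2 v, (Polynomial.X - Polynomial.C α) := by
  have hlift : spanPolynomial v ∈ Polynomial.lifts (algebraMap (dicksonAlgebra v) R) :=
    (Polynomial.lifts_iff_coeff_lifts _).2 fun m ↦
      ⟨⟨_, coeff_spanPolynomial_mem_dicksonAlgebra hv m⟩, rfl⟩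
  simpa only [spanPolynomial, ZModModule.sub_eq_add] using (Polynomial.mem_lifts _).1 hlift

theorem algEquiv_mem_spanF2 {R : Type*} [CommRing R] [IsDomain R] [Algebra (ZMod 2) R]
    {v : Fin n → R} (hv : LinearIndependent (ZMod 2) v) (g : R ≃ₐ[dicksonAlgebra v] R) {α : R}
    (hα : α ∈ spanF2 v) : g α ∈ spanF2 v := by
  obtain ⟨f, hf⟩ := exists_map_eq_spanPolynomial hv
  rw [← aeval_eq_zero_iff_mem_of_map_eq_prod_X_sub_C hf] at hα ⊢
  rw [Polynomial.aeval_algHom_apply, hα, map_zero]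

theorem adjoin_dicksonAlgebra_spanF2_X :
    Algebra.adjoin (dicksonAlgebra (X : Fin n → MvPolynomial (Fin n) (ZMod 2)))
      (spanF2 (X : Fin n → MvPolynomial (Fin n) (ZMod 2)) : Set (MvPolynomial (Fin n) (ZMod 2))) =
      ⊤ := by
  have hX : Set.range (X : Fin n → MvPolynomial (Fin n) (ZMod 2)) ⊆
      (spanF2 (X : Fin n → MvPolynomial (Fin n) (ZMod 2)) : Set _) :=
    Set.range_subset_iff.2 fun j ↦ mem_spanF2.2 (Submodule.subset_span ⟨j, rfl⟩)
  refine top_le_iff.1 ((Algebra.adjoin_mono hX).trans' ?_)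
  rw [← Algebra.adjoin_adjoin_of_tower (ZMod 2), adjoin_range_X, Algebra.coe_top,
    Algebra.adjoin_univ]

theorem algebraicIndependent_dickson_X :
    AlgebraicIndependent (ZMod 2)
      fun j : Fin n ↦ dickson (X : Fin n → MvPolynomial (Fin n) (ZMod 2)) (j + 1) := by
  obtain ⟨f, hf⟩ := exists_map_eq_spanPolynomial (linearIndependent_X (Fin n) (ZMod 2))
  have : Algebra.IsIntegral (dicksonAlgebra X) (MvPolynomial (Fin n) (ZMod 2)) :=
    isIntegral_of_adjoin_roots_eq_top hf adjoin_dicksonAlgebra_spanF2_X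
  have : Algebra.IsAlgebraic (Algebra.adjoin (ZMod 2) (Set.range fun j : Fin n ↦
    dickson (X : Fin n → MvPolynomial (Fin n) (ZMod 2)) (j + 1))) (MvPolynomial (Fin n) (ZMod 2)) :=
      this.isAlgebraic
  refine (Algebra.IsAlgebraic.isTranscendenceBasis_of_le_trdeg_of_finite (ZMod 2) _ ?_).1
  rw [trdeg_of_isDomain, Cardinal.lift_id]

theorem isIntegrallyClosed_dicksonAlgebra_X :
    IsIntegrallyClosed (dicksonAlgebra (X : Fin n → MvPolynomial (Fin n) (ZMod 2))) :=
  .of_equiv algebraicIndependent_dickson_X.aevalEquiv.toRingEquiv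

/-- Dickson's theorem, with invariance tested on the transvections generating `GLₙ(𝔽₂)`. -/
theorem mem_dicksonAlgebra_X_of_transvection {p : MvPolynomial (Fin n) (ZMod 2)}
    (hp : ∀ i j, i ≠ j → transvectionHom (ZMod 2) i j p = p) :
    p ∈ dicksonAlgebra (X : Fin n → MvPolynomial (Fin n) (ZMod 2)) := by
  have := isIntegrallyClosed_dicksonAlgebra_X (n := n)
  obtain ⟨f, hf⟩ := exists_map_eq_spanPolynomial (linearIndependent_X (Fin n) (ZMod 2))
  have hinv := isInvariant_of_adjoin_roots_eq_top hf adjoin_dicksonAlgebra_spanF2_X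
  have hfixed (g : MvPolynomial (Fin n) (ZMod 2) ≃ₐ[dicksonAlgebra
      (X : Fin n → MvPolynomial (Fin n) (ZMod 2))] MvPolynomial (Fin n) (ZMod 2)) :
      g p = p := by
    obtain ⟨M, hM, hg⟩ := exists_isUnit_eq_bind₁_toMvPolynomial
      (f := g.toAlgHom.restrictScalars (ZMod 2)) g.injective fun i ↦ mem_spanF2.1 <|
        algEquiv_mem_spanF2 (linearIndependent_X (Fin n) (ZMod 2)) g <| mem_spanF2.2 <|
          Submodule.subset_span ⟨i, rfl⟩
    exact (DFunLike.congr_fun hg p).trans (bind₁_toMvPolynomial_eq_self_of_transvection hp hM)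
  obtain ⟨a, rfl⟩ := hinv.isInvariant p hfixed
  exact a.2

end Dickson

section DicksonAlgebra

variable {R S : Type*} [CommRing R] [CommRing S] [Algebra (ZMod 2) R] [Algebra (ZMod 2) S] {n : ℕ}

theorem map_dicksonAlgebra (f : R →ₐ[ZMod 2] S) (hf : Function.Injective f) (v : Fin n → R) :
    (dicksonAlgebra v).map f = dicksonAlgebra (f ∘ v) := by
  rw [dicksonAlgebra, AlgHom.map_adjoin, ← Set.range_comp, dicksonAlgebra]
  congr! with j
  exact map_dickson (f : R →+* S) hf v (j + 1)

theorem dvd_prodAdd (v : Fin n → R) (w : R) : w ∣ prodAdd v w := by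
  have hzero : (0 : R) ∈ spanF2 v := mem_spanF2.2 (zero_mem _)
  simpa [prodAdd] using Finset.dvd_prod_of_mem (w + ·) hzero

/-- The subalgebra generated by `D₁(v), …, Dₙ(v)` and `∏ (w + α)`, with `α` in the span of `v`. When
`v, w` are the variables of a polynomial ring, its elements are invariant under the parabolic
subgroup of linear substitutions preserving the span of `v`. -/
def parabolicAlgebra (v : Fin n → R) (w : R) : Subalgebra (ZMod 2) R :=
  Algebra.adjoin (ZMod 2) (insert (prodAdd v w) (Set.range fun j : Fin n ↦ dickson v (j + 1)))

theorem mem_parabolicAlgebra_iff_exists_aeval {v : Fin n → R} {w β : R} :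
    β ∈ parabolicAlgebra v w ↔
      ∃ p : (dicksonAlgebra v)[X], Polynomial.aeval (prodAdd v w) p = β := by
  rw [parabolicAlgebra, ← Set.union_singleton, Algebra.adjoin_union_eq_adjoin_adjoin,
    Subalgebra.mem_restrictScalars, Algebra.adjoin_singleton_eq_range_aeval]
  rfl

theorem map_eq_self_of_mem_parabolicAlgebra {f : R →ₐ[ZMod 2] R} (hf : Function.Injective f)
    {v : Fin n → R} {w t : R} (hv : ∀ j, f (v j) ∈ spanF2 v) (ht : t ∈ spanF2 v)
    (hw : f w = w + t) {β : R} (hβ : β ∈ parabolicAlgebra v w) : f β = β := by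
  have hspan : spanF2 (f ∘ v) = spanF2 v := spanF2_comp_eq_of_mem (f : R →+* R) hf hv
  refine AlgHom.adjoin_le_equalizer f (AlgHom.id _ R) ?_ hβ
  rintro _ (rfl | ⟨j, rfl⟩)
  · calc f (prodAdd v w) = prodAdd (f ∘ v) (f w) := map_prodAdd (f : R →+* R) hf v w
      _ = prodAdd v (w + t) := by rw [prodAdd, hspan, hw, prodAdd]
      _ = prodAdd v w := prodAdd_add_of_mem v w ht
  · calc f (dickson v (j + 1)) = dickson (f ∘ v) (j + 1) := map_dickson (f : R →+* R) hf v _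
      _ = dickson v (j + 1) := by rw [dickson, hspan, dickson]

theorem map_prodAdd_snoc_mul_prodAdd_of_swap {f : R →+* R} (hf : Function.Injective f)
    {u : Fin n → R} {z w : R} (hu : f ∘ u = u) (hz : f z = w) (hw : f w = z)
    (hzu : z ∉ spanF2 u) :
    f (prodAdd (Fin.snoc u z : Fin (n + 1) → R) w * prodAdd u z) =
      prodAdd (Fin.snoc u z : Fin (n + 1) → R) w * prodAdd u z := by
  simp only [prodAdd_snoc hzu, map_mul, map_prodAdd f hf, hu, map_add, hz, hw, add_comm z w]
  ring

end DicksonAlgebra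

theorem X_pow_dvd_of_pow_dvd_aeval_mul {A R : Type*} [CommRing A] [CommRing R] [IsDomain R]
    [Algebra A R] {w u : R} (hw : Prime w) (hA : ∀ a : A, w ∣ algebraMap A R a → a = 0)
    (hu : ¬w ∣ u) {p : A[X]} {i : ℕ} (h : w ^ i ∣ Polynomial.aeval (w * u) p) :
    Polynomial.X ^ i ∣ p := by
  induction i generalizing p with
  | zero => simp
  | succ i ih =>
    have hdecomp : Polynomial.aeval (w * u) p =
        w * (u * Polynomial.aeval (w * u) p.divX) + algebraMap A R (p.coeff 0) := by
      nth_rw 1 [← Polynomial.X_mul_divX_add p]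
      simp only [map_add, map_mul, Polynomial.aeval_X, Polynomial.aeval_C, mul_assoc]
    have hcoeff : p.coeff 0 = 0 := by
      refine hA _ ((dvd_add_right (dvd_mul_right w (u * Polynomial.aeval (w * u) p.divX))).1 ?_)
      exact hdecomp ▸ (dvd_pow_self w i.succ_ne_zero).trans h
    rw [hdecomp, hcoeff, map_zero, add_zero, pow_succ', mul_dvd_mul_iff_left hw.ne_zero] at h
    rw [← Polynomial.X_mul_divX_add p, hcoeff, map_zero, add_zero, pow_succ']
    exact mul_dvd_mul_left _ (ih (hw.pow_dvd_of_dvd_mul_left i hu h))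

theorem exists_prodAdd_eq_mul_not_dvd {R : Type*} [CommRing R] [Algebra (ZMod 2) R] {n : ℕ}
    {v : Fin n → R} {w : R} (hw : Prime w) (hspan : ∀ α ∈ spanF2 v, w ∣ α → α = 0) :
    ∃ u, prodAdd v w = w * u ∧ ¬w ∣ u := by
  classical
  refine ⟨∏ α ∈ (spanF2 v).erase 0, (w + α), ?_, fun h ↦ ?_⟩
  · have hzero : (0 : R) ∈ spanF2 v := mem_spanF2.2 (zero_mem _)
    simpa [prodAdd] using (Finset.mul_prod_erase (spanF2 v) (w + ·) hzero).symm
  · obtain ⟨α, hα, hdvd⟩ := (hw.dvd_finsetProd_iff _).1 h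
    rw [Finset.mem_erase] at hα
    exact hα.1 (hspan α hα.2 ((dvd_add_right dvd_rfl).1 hdvd))

theorem exists_eq_mul_prodAdd_pow_of_pow_dvd {R : Type*} [CommRing R] [IsDomain R]
    [Algebra (ZMod 2) R] {n : ℕ} {v : Fin n → R} {w : R} (hw : Prime w)
    (hspan : ∀ α ∈ spanF2 v, w ∣ α → α = 0) (hdickson : ∀ a ∈ dicksonAlgebra v, w ∣ a → a = 0)
    {β : R} (hβ : β ∈ parabolicAlgebra v w) {i : ℕ} (hdvd : w ^ i ∣ β) :
    ∃ γ ∈ parabolicAlgebra v w, β = γ * prodAdd v w ^ i := by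
  obtain ⟨u, hu, hwu⟩ := exists_prodAdd_eq_mul_not_dvd hw hspan
  obtain ⟨p, rfl⟩ := mem_parabolicAlgebra_iff_exists_aeval.1 hβ
  obtain ⟨q, rfl⟩ : Polynomial.X ^ i ∣ p :=
    X_pow_dvd_of_pow_dvd_aeval_mul hw (fun a ha ↦ Subtype.ext (hdickson a a.2 ha)) hwu (hu ▸ hdvd)
  exact ⟨Polynomial.aeval (prodAdd v w) q, mem_parabolicAlgebra_iff_exists_aeval.2 ⟨q, rfl⟩,
    by simp [mul_comm]⟩

section LastVariable

theorem eq_zero_of_X_dvd_rename {σ τ k : Type*} [CommSemiring k] {f : σ → τ}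
    (hf : Function.Injective f) {i : τ} (hi : i ∉ Set.range f) {p : MvPolynomial σ k}
    (h : X i ∣ rename f p) : p = 0 := by
  have hX : killCompl hf (X i : MvPolynomial τ k) = 0 := by
    rw [killCompl, aeval_X, dif_neg hi]
  simpa [hX, killCompl_rename_app] using map_dvd (killCompl hf) h

variable {n : ℕ}

theorem eq_zero_of_X_last_dvd_rename_castSucc {k : Type*} [CommSemiring k]
    {p : MvPolynomial (Fin n) k} (h : X (Fin.last n) ∣ rename Fin.castSucc p) : p = 0 :=
  eq_zero_of_X_dvd_rename (Fin.castSucc_injective n) (by simp) h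

/-- All variables of a polynomial ring except the last one. -/
def initX (k : Type*) [CommSemiring k] (n : ℕ) : Fin n → MvPolynomial (Fin (n + 1)) k :=
  fun j ↦ X j.castSucc

theorem rename_castSucc_comp_X {k : Type*} [CommSemiring k] :
    rename Fin.castSucc ∘ (X : Fin n → MvPolynomial (Fin n) k) = initX k n :=
  funext fun j ↦ rename_X _ j

theorem eq_zero_of_X_last_dvd_of_mem_spanF2 {α : MvPolynomial (Fin (n + 1)) (ZMod 2)}
    (hα : α ∈ spanF2 (initX (ZMod 2) n)) (h : X (Fin.last n) ∣ α) : α = 0 := by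
  rw [← rename_castSucc_comp_X, ← AlgHom.coe_toRingHom,
    ← map_spanF2 _ (rename_injective _ (Fin.castSucc_injective n))] at hα
  obtain ⟨p, -, rfl⟩ := Finset.mem_map.1 hα
  have hp : p = 0 := eq_zero_of_X_last_dvd_rename_castSucc h
  exact (congrArg (rename Fin.castSucc) hp).trans (map_zero _)

theorem eq_zero_of_X_last_dvd_of_mem_dicksonAlgebra {a : MvPolynomial (Fin (n + 1)) (ZMod 2)}
    (ha : a ∈ dicksonAlgebra (initX (ZMod 2) n)) (h : X (Fin.last n) ∣ a) : a = 0 := by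
  rw [← rename_castSucc_comp_X,
    ← map_dicksonAlgebra _ (rename_injective _ (Fin.castSucc_injective n))] at ha
  obtain ⟨p, -, rfl⟩ := ha
  have hp : p = 0 := eq_zero_of_X_last_dvd_rename_castSucc h
  exact (congrArg (rename Fin.castSucc) hp).trans (map_zero _)

theorem X_last_notMem_spanF2_initX : X (Fin.last n) ∉ spanF2 (initX (ZMod 2) n) := by
  intro h
  exact X_ne_zero _ (eq_zero_of_X_last_dvd_of_mem_spanF2 h dvd_rfl)

/-- The product `∏ (xₙ₊₁ + α)` over the span of `x₁, …, xₙ`. For `n = 3` it is `b₈`, and for `n = 2`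
it is `c'₄`. -/
def orbitProdLast (n : ℕ) : MvPolynomial (Fin (n + 1)) (ZMod 2) :=
  prodAdd (initX (ZMod 2) n) (X (Fin.last n))

theorem orbitProdLast_ne_zero : orbitProdLast n ≠ 0 :=
  prodAdd_eq_zero_iff.not.2 X_last_notMem_spanF2_initX

theorem transvectionHom_eq_self_of_ne_last {γ : MvPolynomial (Fin (n + 1)) (ZMod 2)}
    (hγ : γ ∈ parabolicAlgebra (initX (ZMod 2) n) (X (Fin.last n)))
    {i j : Fin (n + 1)} (hij : i ≠ j) (hj : j ≠ Fin.last n) :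
    transvectionHom (ZMod 2) i j γ = γ := by
  obtain ⟨j, rfl⟩ := Fin.exists_castSucc_eq.2 hj
  have hX (l : Fin n) : X l.castSucc ∈ Submodule.span (ZMod 2) (Set.range (initX (ZMod 2) n)) :=
    Submodule.subset_span ⟨l, rfl⟩
  have hv (l : Fin n) :
      transvectionHom (ZMod 2) i j.castSucc (initX (ZMod 2) n l) ∈ spanF2 (initX (ZMod 2) n) := by
    rw [mem_spanF2, initX]
    rcases eq_or_ne l.castSucc i with rfl | hl
    · rw [transvectionHom_X_self]
      exact add_mem (hX l) (hX j)
    · rw [transvectionHom_X_of_ne hl]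
      exact hX l
  obtain ⟨t, ht, hw⟩ : ∃ t ∈ spanF2 (initX (ZMod 2) n),
      transvectionHom (ZMod 2) i j.castSucc (X (Fin.last n)) = X (Fin.last n) + t := by
    rcases eq_or_ne (Fin.last n) i with rfl | hi
    · exact ⟨X j.castSucc, mem_spanF2.2 (hX j), transvectionHom_X_self _ _⟩
    · exact ⟨0, mem_spanF2.2 (zero_mem _), by rw [transvectionHom_X_of_ne hi, add_zero]⟩
  exact map_eq_self_of_mem_parabolicAlgebra (transvectionHom_injective hij) hv ht hw hγ

end LastVariable

section SwapLast

variable {n : ℕ}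

/-- The automorphism `κ` exchanging the last two of `n + 2` variables. -/
def swapLast (k : Type*) [CommSemiring k] (n : ℕ) :
    MvPolynomial (Fin (n + 2)) k →ₐ[k] MvPolynomial (Fin (n + 2)) k :=
  rename (Equiv.swap (Fin.last n).castSucc (Fin.last (n + 1)))

section CommSemiring

variable {k : Type*} [CommSemiring k]

theorem swapLast_injective : Function.Injective (swapLast k n) :=
  rename_injective _ (Equiv.injective _)

theorem swapLast_X_castSucc_last :
    swapLast k n (X (Fin.last n).castSucc) = X (Fin.last (n + 1)) := by
  rw [swapLast, rename_X, Equiv.swap_apply_left]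

theorem swapLast_X_last : swapLast k n (X (Fin.last (n + 1))) = X (Fin.last n).castSucc := by
  rw [swapLast, rename_X, Equiv.swap_apply_right]

theorem swapLast_comp_rename_castSucc_comp_initX :
    swapLast k n ∘ rename Fin.castSucc ∘ initX k n = rename Fin.castSucc ∘ initX k n := by
  funext j
  simp only [Function.comp_apply, initX, swapLast, rename_X]
  refine congrArg X (Equiv.swap_apply_of_ne_of_ne ?_ (Fin.castSucc_lt_last _).ne)
  exact (Fin.castSucc_injective _).ne (Fin.castSucc_lt_last j).ne

theorem snoc_rename_castSucc_comp_initX :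
    Fin.snoc (rename Fin.castSucc ∘ initX k n) (X (Fin.last n).castSucc) = initX k (n + 1) := by
  funext j
  cases j using Fin.lastCases <;> simp [initX]

end CommSemiring

theorem rename_castSucc_orbitProdLast :
    rename Fin.castSucc (orbitProdLast n) =
      prodAdd (rename Fin.castSucc ∘ initX (ZMod 2) n) (X (Fin.last n).castSucc) :=
  (map_prodAdd (rename Fin.castSucc : _ →ₐ[ZMod 2] _).toRingHom
    (rename_injective _ (Fin.castSucc_injective _)) _ _).trans
    (congrArg _ (rename_X Fin.castSucc _))

theorem X_last_dvd_swapLast_rename_orbitProdLast :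
    X (Fin.last (n + 1)) ∣ swapLast (ZMod 2) n (rename Fin.castSucc (orbitProdLast n)) := by
  rw [rename_castSucc_orbitProdLast, ← AlgHom.coe_toRingHom, map_prodAdd _ swapLast_injective]
  exact swapLast_X_castSucc_last (k := ZMod 2) ▸ dvd_prodAdd _ _

theorem X_last_pow_dvd_of_swapLast_eq {β : MvPolynomial (Fin (n + 2)) (ZMod 2)} {i : ℕ}
    (hκ : swapLast (ZMod 2) n (β * rename Fin.castSucc (orbitProdLast n) ^ i) =
      β * rename Fin.castSucc (orbitProdLast n) ^ i) :
    X (Fin.last (n + 1)) ^ i ∣ β := by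
  have hdvd : X (Fin.last (n + 1)) ^ i ∣ β * rename Fin.castSucc (orbitProdLast n) ^ i := by
    rw [← hκ, map_mul, map_pow]
    exact (pow_dvd_pow_of_dvd X_last_dvd_swapLast_rename_orbitProdLast i).mul_left _
  have hnot : ¬X (Fin.last (n + 1)) ∣ rename Fin.castSucc (orbitProdLast n) := fun h ↦
    orbitProdLast_ne_zero (eq_zero_of_X_last_dvd_rename_castSucc h)
  have hprime : Prime (X (Fin.last (n + 1)) : MvPolynomial (Fin (n + 2)) (ZMod 2)) := X_prime
  exact hprime.pow_dvd_of_dvd_mul_right i (fun h ↦ hnot (hprime.dvd_of_dvd_pow h)) hdvd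

theorem swapLast_orbitProdLast_mul :
    swapLast (ZMod 2) n (orbitProdLast (n + 1) * rename Fin.castSucc (orbitProdLast n)) =
      orbitProdLast (n + 1) * rename Fin.castSucc (orbitProdLast n) := by
  have hnotMem : X (Fin.last n).castSucc ∉ spanF2 (rename Fin.castSucc ∘ initX (ZMod 2) n) := by
    rw [← prodAdd_eq_zero_iff, ← rename_castSucc_orbitProdLast,
      map_eq_zero_iff _ (rename_injective _ (Fin.castSucc_injective _))]
    exact orbitProdLast_ne_zero
  rw [rename_castSucc_orbitProdLast, orbitProdLast, ← snoc_rename_castSucc_comp_initX]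
  exact map_prodAdd_snoc_mul_prodAdd_of_swap (f := (swapLast (ZMod 2) n).toRingHom)
    swapLast_injective swapLast_comp_rename_castSucc_comp_initX swapLast_X_castSucc_last
    swapLast_X_last hnotMem

theorem mem_dicksonAlgebra_X_of_swapLast_eq {γ : MvPolynomial (Fin (n + 2)) (ZMod 2)}
    (hγ : γ ∈ parabolicAlgebra (initX (ZMod 2) (n + 1)) (X (Fin.last (n + 1))))
    (hκ : swapLast (ZMod 2) n γ = γ) :
    γ ∈ dicksonAlgebra (X : Fin (n + 2) → MvPolynomial (Fin (n + 2)) (ZMod 2)) := by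
  refine mem_dicksonAlgebra_X_of_transvection fun i j hij ↦ ?_
  rcases eq_or_ne j (Fin.last (n + 1)) with rfl | hj
  · let e := Equiv.swap (Fin.last n).castSucc (Fin.last (n + 1))
    have hne : e i ≠ (Fin.last n).castSucc := by simpa [e, Equiv.swap_apply_eq_iff] using hij
    have hfixed : transvectionHom (ZMod 2) (e i) (Fin.last n).castSucc γ = γ :=
      transvectionHom_eq_self_of_ne_last hγ hne (Fin.castSucc_lt_last _).ne
    calc transvectionHom (ZMod 2) i (Fin.last (n + 1)) γ
        = transvectionHom (ZMod 2) (e (e i)) (e (Fin.last n).castSucc) (swapLast (ZMod 2) n γ) := by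
          simp [e, hκ]
      _ = swapLast (ZMod 2) n (transvectionHom (ZMod 2) (e i) (Fin.last n).castSucc γ) :=
          transvectionHom_rename e _ _ γ
      _ = γ := by rw [hfixed, hκ]
  · exact transvectionHom_eq_self_of_ne_last hγ hij hj

end SwapLast

theorem stmt_13_general (n : ℕ) (β : MvPolynomial (Fin (n + 2)) (ZMod 2)) (i : ℕ)
    (hβ : β ∈ parabolicAlgebra (initX (ZMod 2) (n + 1)) (X (Fin.last (n + 1))))
    (hκ : swapLast (ZMod 2) n (β * rename Fin.castSucc (orbitProdLast n) ^ i) =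
      β * rename Fin.castSucc (orbitProdLast n) ^ i) :
    ∃ β' ∈ dicksonAlgebra (X : Fin (n + 2) → MvPolynomial (Fin (n + 2)) (ZMod 2)),
      β = β' * orbitProdLast (n + 1) ^ i := by
  obtain ⟨γ, hγ, rfl⟩ := exists_eq_mul_prodAdd_pow_of_pow_dvd X_prime
    (fun _ ↦ eq_zero_of_X_last_dvd_of_mem_spanF2)
    (fun _ ↦ eq_zero_of_X_last_dvd_of_mem_dicksonAlgebra) hβ (X_last_pow_dvd_of_swapLast_eq hκ)
  refine ⟨γ, mem_dicksonAlgebra_X_of_swapLast_eq hγ ?_, rfl⟩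
  have hne : orbitProdLast (n + 1) * rename Fin.castSucc (orbitProdLast n) ≠ 0 :=
    mul_ne_zero orbitProdLast_ne_zero ((map_ne_zero_iff _
      (rename_injective _ (Fin.castSucc_injective _))).2 orbitProdLast_ne_zero)
  rw [← orbitProdLast, mul_assoc, ← mul_pow, map_mul, map_pow, swapLast_orbitProdLast_mul] at hκ
  exact mul_right_cancel₀ (pow_ne_zero i hne) hκ

theorem xyzw_eq_X : (![xP, yP, zP, wP] : Fin 4 → R4) = X := by
  funext j
  fin_cases j <;> rfl

theorem xyz_eq_initX : (![xP, yP, zP] : Fin 3 → R4) = initX (ZMod 2) 3 := by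
  funext j
  fin_cases j <;> rfl

theorem b8_eq_orbitProdLast : b8 = orbitProdLast 3 := by
  rw [b8, xyz_eq_initX]
  rfl

theorem parabolicAlgebra_three :
    parabolicAlgebra (initX (ZMod 2) 3) (X (Fin.last 3)) =
      Algebra.adjoin (ZMod 2) {b4, b6, b7, b8} := by
  have hdickson : (fun j : Fin 3 ↦ dickson (initX (ZMod 2) 3) (j + 1)) = ![b4, b6, b7] := by
    rw [← xyz_eq_initX]
    funext j
    fin_cases j <;> rfl
  have hb8 : prodAdd (initX (ZMod 2) 3) (X (Fin.last 3)) = b8 := b8_eq_orbitProdLast.symm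
  rw [parabolicAlgebra, hdickson, hb8]
  congr 1
  ext a
  simp [or_comm, or_left_comm]

theorem dicksonAlgebra_four :
    dicksonAlgebra (X : Fin 4 → R4) = Algebra.adjoin (ZMod 2) {a8, a12, a14, a15} := by
  have hdickson : (fun j : Fin 4 ↦ dickson (X : Fin 4 → R4) (j + 1)) = ![a8, a12, a14, a15] := by
    rw [← xyzw_eq_X]
    funext j
    fin_cases j <;> rfl
  rw [dicksonAlgebra, hdickson]
  congr 1
  ext a
  simp [or_comm, or_left_comm]

theorem c4'_eq_rename_orbitProdLast : c4' = rename Fin.castSucc (orbitProdLast 2) := by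
  rw [rename_castSucc_orbitProdLast, c4']
  congr 1
  funext j
  fin_cases j <;> simp [initX, xP, yP]

theorem kappaEnd_eq_swapLast : kappaEnd = swapLast (ZMod 2) 2 := by
  refine algHom_ext fun j ↦ ?_
  rw [kappaEnd, swapLast, aeval_X, rename_X]
  fin_cases j <;> rfl

theorem stmt_13 (β : R4) (i : ℕ) (hβ : β ∈ Algebra.adjoin (ZMod 2) {b4, b6, b7, b8})
    (hκ : kappaEnd (β * c4' ^ i) = β * c4' ^ i) :
    ∃ β' ∈ Algebra.adjoin (ZMod 2) {a8, a12, a14, a15}, β = β' * b8 ^ i := by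
  rw [← parabolicAlgebra_three] at hβ
  rw [kappaEnd_eq_swapLast, c4'_eq_rename_orbitProdLast] at hκ
  rw [← dicksonAlgebra_four, b8_eq_orbitProdLast]
  exact stmt_13_general 2 β i hβ hκ
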